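/- arXiv:1606.01199 — 9 statements merged into one kernel-verified Lean document; each statement's English description precedes it below -/
import Mathlib

section
/- Let M be a nondeterministic finite automaton over alphabet α with a finite state type σ, and let n be a natural number. If M accepts some word of length greater than n, then M accepts some word w' with n < |w'| ≤ n + (number of states of M). -/
/-- A word at least as long as the number of states of an NFA that accepts it can be pumped down:
deleting a suitable nonempty factor, of length at most the number of states, leaves an accepted
word. -/
theorem NFA.exists_mem_accepts_shorter {α : Type*} {σ : Type*} [Fintype σ] (M : NFA α σ)
    {w : List α} (hw : w ∈ M.accepts) (hlen : Fintype.card σ ≤ w.length) :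
    ∃ w' ∈ M.accepts, w'.length < w.length ∧ w.length ≤ w'.length + Fintype.card σ := by
  obtain ⟨t, ht, hwt⟩ := M.mem_accepts.1 hw
  have hsplit (i : ℕ) : ∃ q ∈ M.evalFrom M.start (w.take i), t ∈ M.evalFrom {q} (w.drop i) := by
    rwa [← M.mem_evalFrom_iff_exists, ← M.evalFrom_append, List.take_append_drop]
  choose q hstart hend using hsplit
  obtain ⟨i, j, hij, hq⟩ : ∃ i j : Fin (Fintype.card σ + 1), i < j ∧ q i = q j := by
    obtain ⟨i, j, hne, hq⟩ := Fintype.exists_ne_map_eq_of_card_lt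
      (fun i : Fin (Fintype.card σ + 1) => q i) (by simp)
    rcases lt_or_gt_of_ne hne with h | h
    · exact ⟨i, j, h, hq⟩
    · exact ⟨j, i, h, hq.symm⟩
  refine ⟨w.take i ++ w.drop j, M.mem_accepts.2 ⟨t, ht, ?_⟩, ?_⟩
  · rw [M.evalFrom_append, M.mem_evalFrom_iff_exists]
    exact ⟨q i, hstart i, hq ▸ hend j⟩
  · have hj := j.isLt
    rw [Fin.lt_def] at hij
    simp only [List.length_append, List.length_take, List.length_drop]
    omega

/-- if an NFA accepts a word longer than `n`, it accepts a word `w'`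
with `n < |w'| ≤ n + (number of states)`. -/
theorem stmt_3 {α : Type*} {σ : Type*} [Fintype σ] (M : NFA α σ) (n : ℕ)
    (h : ∃ w ∈ M.accepts, n < w.length) :
    ∃ w' ∈ M.accepts, n < w'.length ∧ w'.length ≤ n + Fintype.card σ := by
  obtain ⟨w, hw, hn⟩ := h
  induction hk : w.length using Nat.strong_induction_on generalizing w with
  | _ k ih =>
    by_cases hle : w.length ≤ n + Fintype.card σ
    · exact ⟨w, hw, hn, hle⟩
    · obtain ⟨w', hw', hlt, hge⟩ := M.exists_mem_accepts_shorter hw (by omega)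
      exact ih w'.length (hk ▸ hlt) w' hw' (by omega) rfl
end

section
/- Let M be a nondeterministic finite automaton over alphabet α with finite state type σ, and let u, v be words over α. Then M.accepts ⊆ u ⧢ v if and only if every word w ∈ M.accepts with |w| ≤ |u| + |v| + (number of states of M) belongs to u ⧢ v. (Equivalently: non-inclusion L(M) ⊄ u ⧢ v is always witnessed by an accepted word of length at most |u| + |v| + |Q|.) -/
/-- `IsShuffle u v w` holds iff `w` is an interleaving of `u` and `v`,
i.e. `w = u₁v₁u₂v₂⋯uₙvₙ` for some decompositions `u = u₁⋯uₙ`, `v = v₁⋯vₙ`. -/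
inductive IsShuffle {α : Type*} : List α → List α → List α → Prop
  | nil : IsShuffle [] [] []
  | left {a : α} {u v w : List α} : IsShuffle u v w → IsShuffle (a :: u) v (a :: w)
  | right {a : α} {u v w : List α} : IsShuffle u v w → IsShuffle u (a :: v) (a :: w)

/-- The shuffle `u ⧢ v` of two words, as a set of words. -/
def wordShuffle {α : Type*} (u v : List α) : Set (List α) := {w | IsShuffle u v w}

/-- The shuffle of two languages. -/
def langShuffle {α : Type*} (L₁ L₂ : Set (List α)) : Set (List α) :=
  ⋃ u ∈ L₁, ⋃ v ∈ L₂, wordShuffle u v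

theorem IsShuffle.length_eq {α : Type*} {u v w : List α} (h : IsShuffle u v w) :
    w.length = u.length + v.length := by
  induction h with
  | nil => rfl
  | left _ ih => simp only [List.length_cons, ih]; omega
  | right _ ih => simp only [List.length_cons, ih]; omega

/-- An accepted word at least as long as the number of states can be shortened, by at most the
number of states, to another accepted word. -/
theorem NFA.exists_shorter_mem_accepts {α σ : Type*} [Fintype σ] {M : NFA α σ} {w : List α}
    (hw : w ∈ M.accepts) (hlen : Fintype.card σ ≤ w.length) :
    ∃ x ∈ M.accepts, x.length < w.length ∧ w.length ≤ x.length + Fintype.card σ := by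
  have hsplit : ∀ i : ℕ, ∃ q ∈ M.evalFrom M.start (w.take i),
      ∃ s ∈ M.accept, s ∈ M.evalFrom {q} (w.drop i) := by
    intro i
    obtain ⟨s, hs, hsw⟩ := NFA.mem_accepts.mp hw
    rw [← List.take_append_drop i w, NFA.evalFrom_append, NFA.mem_evalFrom_iff_exists] at hsw
    obtain ⟨q, hq, hqs⟩ := hsw
    exact ⟨q, hq, s, hs, hqs⟩
  choose q hq s hs hqs using hsplit
  have hshort : ∀ i j : ℕ, i < j → j ≤ Fintype.card σ → q i = q j →
      ∃ x ∈ M.accepts, x.length < w.length ∧ w.length ≤ x.length + Fintype.card σ := by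
    intro i j hij hj heq
    refine ⟨w.take i ++ w.drop j, NFA.mem_accepts.mpr ⟨s j, hs j, ?_⟩, ?_, ?_⟩
    · rw [NFA.evalFrom_append, NFA.mem_evalFrom_iff_exists]
      exact ⟨q j, heq ▸ hq i, hqs j⟩
    all_goals
      simp only [List.length_append, List.length_take, List.length_drop]
      omega
  obtain ⟨i, j, hne, heq⟩ := Fintype.exists_ne_map_eq_of_card_lt
    (fun i : Fin (Fintype.card σ + 1) => q i) (by simp)
  rcases lt_or_gt_of_ne hne with h | h
  · exact hshort i j h (Nat.lt_succ_iff.mp j.isLt) heq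
  · exact hshort j i h (Nat.lt_succ_iff.mp i.isLt) heq.symm

/-- `L(M) ⊆ u ⧢ v` iff every accepted word of length at most
`|u| + |v| + |Q|` lies in `u ⧢ v`. -/
theorem stmt_4 {α : Type*} {σ : Type*} [Fintype σ] (M : NFA α σ) (u v : List α) :
    (∀ w ∈ M.accepts, w ∈ wordShuffle u v) ↔
      (∀ w ∈ M.accepts, w.length ≤ u.length + v.length + Fintype.card σ →
        w ∈ wordShuffle u v) := by
  refine ⟨fun h w hw _ => h w hw, fun h w => ?_⟩
  induction hn : w.length using Nat.strong_induction_on generalizing w with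
  | _ n ih =>
    intro hw
    by_cases hlen : w.length ≤ u.length + v.length + Fintype.card σ
    · exact h w hw hlen
    · obtain ⟨x, hx, hlt, hle⟩ := NFA.exists_shorter_mem_accepts hw (by omega)
      have hxlen := IsShuffle.length_eq (ih x.length (hn ▸ hlt) x rfl hx)
      omega
end

section
/- Let α be an alphabet and let Q₁, Q₂ be sets of multisets over α. Then the set of words whose letter-multiset lies in Q₁ + Q₂ = {m₁ + m₂ | m₁ ∈ Q₁, m₂ ∈ Q₂} equals the shuffle of the set of words whose letter-multiset lies in Q₁ with the set of words whose letter-multiset lies in Q₂. In symbols: ψ⁻¹(Q₁ + Q₂) = ψ⁻¹(Q₁) ⧢ ψ⁻¹(Q₂), where ψ maps a word to its letter-multiset. -/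
open Pointwise

/-- The letter-multiset of a shuffle is the sum of the letter-multisets. -/
theorem IsShuffle.coe_eq_add {α : Type*} {u v w : List α} (h : IsShuffle u v w) :
    (w : Multiset α) = u + v := by
  induction h with
  | nil => rfl
  | left _ ih => rw [← Multiset.cons_coe, ih, ← Multiset.cons_coe, Multiset.cons_add]
  | right _ ih => rw [← Multiset.cons_coe, ih, ← Multiset.cons_coe, Multiset.add_cons]

/-- A splitting of the letter-multiset of a word is induced by a splitting of the word. -/
theorem exists_isShuffle_of_coe_eq_add {α : Type*} (w : List α) (m₁ m₂ : Multiset α)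
    (h : (w : Multiset α) = m₁ + m₂) :
    ∃ u v : List α, (u : Multiset α) = m₁ ∧ (v : Multiset α) = m₂ ∧ IsShuffle u v w := by
  induction w generalizing m₁ m₂ with
  | nil =>
    obtain ⟨rfl, rfl⟩ := add_eq_zero.mp h.symm
    exact ⟨[], [], rfl, rfl, .nil⟩
  | cons a w ih =>
    rw [← Multiset.cons_coe] at h
    have ha : a ∈ m₁ + m₂ := h ▸ Multiset.mem_cons_self a _
    rcases Multiset.mem_add.mp ha with ha | ha
    · obtain ⟨m, rfl⟩ := Multiset.exists_cons_of_mem ha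
      rw [Multiset.cons_add, Multiset.cons_inj_right] at h
      obtain ⟨u, v, rfl, rfl, hs⟩ := ih _ _ h
      exact ⟨a :: u, v, rfl, rfl, hs.left⟩
    · obtain ⟨m, rfl⟩ := Multiset.exists_cons_of_mem ha
      rw [Multiset.add_cons, Multiset.cons_inj_right] at h
      obtain ⟨u, v, rfl, rfl, hs⟩ := ih _ _ h
      exact ⟨u, a :: v, rfl, rfl, hs.right⟩

/-- `ψ⁻¹(Q₁ + Q₂) = ψ⁻¹(Q₁) ⧢ ψ⁻¹(Q₂)`, where `ψ` maps a word to
its letter-multiset and `Q₁ + Q₂ = {m₁ + m₂ | m₁ ∈ Q₁, m₂ ∈ Q₂}`. -/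
theorem stmt_5 {α : Type*} (Q₁ Q₂ : Set (Multiset α)) :
    {w : List α | (↑w : Multiset α) ∈ Q₁ + Q₂} =
      langShuffle {w : List α | (↑w : Multiset α) ∈ Q₁}
        {w : List α | (↑w : Multiset α) ∈ Q₂} := by
  ext w
  simp only [langShuffle, wordShuffle, Set.mem_iUnion, Set.mem_ofPred_eq, Set.mem_add, exists_prop]
  constructor
  · rintro ⟨m₁, h₁, m₂, h₂, h⟩
    obtain ⟨u, v, rfl, rfl, hs⟩ := exists_isShuffle_of_coe_eq_add w m₁ m₂ h.symm
    exact ⟨u, h₁, v, h₂, hs⟩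
  · rintro ⟨u, hu, v, hv, hs⟩
    exact ⟨u, hu, v, hv, hs.coe_eq_add.symm⟩
end

section
/- If L₁ and L₂ are languages over α each closed under permutation of letters (i.e., if w ∈ Lᵢ and w' is a permutation of w then w' ∈ Lᵢ), then the shuffle L₁ ⧢ L₂ is closed under permutation of letters. -/
/-- A permutation of an interleaving of `u` and `v` is an interleaving of a permutation of `u` and
a permutation of `v`. -/
theorem IsShuffle.exists_of_perm {α : Type*} {w w' : List α} (h : w.Perm w') :
    ∀ {u v : List α}, IsShuffle u v w →
      ∃ u' v', u.Perm u' ∧ v.Perm v' ∧ IsShuffle u' v' w' := by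
  induction h with
  | nil => exact fun h => ⟨_, _, .rfl, .rfl, h⟩
  | cons a _ ih =>
    intro u v h
    cases h with
    | left h =>
      obtain ⟨u', v', hu, hv, h'⟩ := ih h
      exact ⟨_, _, hu.cons a, hv, h'.left⟩
    | right h =>
      obtain ⟨u', v', hu, hv, h'⟩ := ih h
      exact ⟨_, _, hu, hv.cons a, h'.right⟩
  | swap a b l =>
    intro u v h
    cases h with
    | left h =>
      cases h with
      | left h => exact ⟨_, _, .swap .., .rfl, h.left.left⟩
      | right h => exact ⟨_, _, .rfl, .rfl, h.left.right⟩
    | right h =>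
      cases h with
      | left h => exact ⟨_, _, .rfl, .rfl, h.right.left⟩
      | right h => exact ⟨_, _, .rfl, .swap .., h.right.right⟩
  | trans _ _ ih₁ ih₂ =>
    intro u v h
    obtain ⟨u₁, v₁, hu₁, hv₁, h₁⟩ := ih₁ h
    obtain ⟨u₂, v₂, hu₂, hv₂, h₂⟩ := ih₂ h₁
    exact ⟨u₂, v₂, hu₁.trans hu₂, hv₁.trans hv₂, h₂⟩

/-- the shuffle of two permutation-closed languages is
permutation-closed. -/
theorem stmt_6 {α : Type*} (L₁ L₂ : Set (List α))
    (h₁ : ∀ w ∈ L₁, ∀ w' : List α, w.Perm w' → w' ∈ L₁)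
    (h₂ : ∀ w ∈ L₂, ∀ w' : List α, w.Perm w' → w' ∈ L₂) :
    ∀ w ∈ langShuffle L₁ L₂, ∀ w' : List α, w.Perm w' → w' ∈ langShuffle L₁ L₂ := by
  intro w hw w' hp
  simp only [langShuffle, wordShuffle, Set.mem_iUnion, Set.mem_ofPred_eq, exists_prop] at hw ⊢
  obtain ⟨u, hu, v, hv, h⟩ := hw
  obtain ⟨u', v', hu', hv', h'⟩ := IsShuffle.exists_of_perm hp h
  exact ⟨u', h₁ u hu u' hu', v', h₂ v hv v' hv', h'⟩
end

section
/- Let α be an alphabet and consider words over the disjoint union α ⊕ α, where Sum.inl gives the 'unprimed' copy and Sum.inr the 'primed' copy. Let A = {[inl a₁, inr a₁, inl a₂, inr a₂, …, inl a_k, inr a_k] | k ≥ 0, a₁,…,a_k ∈ α} be the language of alternating unprimed/primed words with matching letters. Then for all languages L₁, L₂ ⊆ α*: A ∩ ((List.map Sum.inl of L₁) ⧢ (List.map Sum.inr of L₂)) = ∅ if and only if L₁ ∩ L₂ = ∅. -/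
/-- Erasing the primed letters of a shuffle of an unprimed and a primed word gives back the
unprimed word, and symmetrically. -/
theorem IsShuffle.filterMap_eq {α β : Type*} {u v w : List (α ⊕ β)} (h : IsShuffle u v w)
    {x : List α} {y : List β} (hu : u = x.map Sum.inl) (hv : v = y.map Sum.inr) :
    w.filterMap Sum.getLeft? = x ∧ w.filterMap Sum.getRight? = y := by
  induction h generalizing x y with
  | nil =>
    obtain rfl := List.map_eq_nil_iff.mp hu.symm
    obtain rfl := List.map_eq_nil_iff.mp hv.symm
    exact ⟨rfl, rfl⟩
  | left _ ih =>
    obtain _ | ⟨b, x⟩ := x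
    · simp at hu
    · obtain ⟨rfl, hu'⟩ := List.cons.inj hu
      simpa [List.filterMap_cons] using ih hu' hv
  | right _ ih =>
    obtain _ | ⟨b, y⟩ := y
    · simp at hv
    · obtain ⟨rfl, hv'⟩ := List.cons.inj hv
      simpa [List.filterMap_cons] using ih hu hv'

theorem isShuffle_flatMap_inl_inr {α : Type*} (l : List α) :
    IsShuffle (l.map Sum.inl) (l.map Sum.inr) (l.flatMap fun a => [Sum.inl a, Sum.inr a]) := by
  induction l with
  | nil => exact .nil
  | cons a l ih => exact .left (.right ih)

/-- with `A` the language of alternating unprimed/primed words with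
matching letters over `α ⊕ α`,
`A ∩ ((inl L₁) ⧢ (inr L₂)) = ∅ ↔ L₁ ∩ L₂ = ∅`. -/
theorem stmt_7 {α : Type*} (L₁ L₂ : Set (List α)) :
    ({w : List (α ⊕ α) | ∃ l : List α,
        w = l.flatMap (fun a => [Sum.inl a, Sum.inr a])} ∩
      langShuffle {w : List (α ⊕ α) | ∃ x ∈ L₁, w = x.map Sum.inl}
        {w : List (α ⊕ α) | ∃ x ∈ L₂, w = x.map Sum.inr} = ∅) ↔
    L₁ ∩ L₂ = ∅ := by
  simp only [Set.eq_empty_iff_forall_notMem]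
  constructor
  · rintro h x ⟨h₁, h₂⟩
    refine h _ ⟨⟨x, rfl⟩, ?_⟩
    simp only [langShuffle, Set.mem_iUnion]
    exact ⟨_, ⟨x, h₁, rfl⟩, _, ⟨x, h₂, rfl⟩, isShuffle_flatMap_inl_inr x⟩
  · rintro h _ ⟨⟨l, rfl⟩, hw⟩
    simp only [langShuffle, Set.mem_iUnion] at hw
    obtain ⟨_, ⟨x, hx, rfl⟩, _, ⟨y, hy, rfl⟩, hs⟩ := hw
    obtain ⟨hl, hr⟩ := IsShuffle.filterMap_eq hs rfl rfl
    obtain ⟨hl', hr'⟩ := (isShuffle_flatMap_inl_inr l).filterMap_eq rfl rfl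
    obtain rfl := hl'.symm.trans hl
    obtain rfl := hr'.symm.trans hr
    exact h _ ⟨hx, hy⟩
end

section
/- Over the two-letter alphabet {a,b}, the shuffle of L₁ = {aⁿ b a bⁿ a | n ≥ 1} and L₂ = {bᵐ a^{m+1} | m ≥ 1} is not a context-free language. -/
namespace ContextFreeGrammar

variable {T : Type*} {g : ContextFreeGrammar T}

/-- `g.Yields s w` holds iff the sentential form `s` derives the terminal word `w`, as witnessed
by a forest of parse trees with roots `s` and frontier `w`. -/
inductive Yields (g : ContextFreeGrammar T) : List (Symbol T g.NT) → List T → Prop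
  | nil : Yields g [] []
  | terminal {s : List (Symbol T g.NT)} {w : List T} (t : T) :
      Yields g s w → Yields g (.terminal t :: s) (t :: w)
  | nonterminal {s : List (Symbol T g.NT)} {u w : List T} (r : ContextFreeRule T g.NT) :
      r ∈ g.rules → Yields g r.output u → Yields g s w →
        Yields g (.nonterminal r.input :: s) (u ++ w)

theorem Yields.map_terminal (w : List T) : g.Yields (w.map .terminal) w := by
  induction w with
  | nil => exact .nil
  | cons t w ih => exact .terminal t ih

theorem Yields.append {s s' : List (Symbol T g.NT)} {w w' : List T} (h : g.Yields s w)
    (h' : g.Yields s' w') : g.Yields (s ++ s') (w ++ w') := by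
  induction h with
  | nil => exact h'
  | terminal t _ ih => exact .terminal t ih
  | nonterminal r hr hu _ _ ih =>
    rw [List.append_assoc]
    exact .nonterminal r hr hu ih

theorem Yields.exists_of_append {s s' : List (Symbol T g.NT)} {w : List T}
    (h : g.Yields (s ++ s') w) :
    ∃ u v, w = u ++ v ∧ g.Yields s u ∧ g.Yields s' v := by
  induction s generalizing w with
  | nil => exact ⟨[], w, rfl, .nil, h⟩
  | cons a s ih =>
    rw [List.cons_append] at h
    cases h with
    | terminal t h =>
      obtain ⟨u, v, rfl, hu, hv⟩ := ih h
      exact ⟨t :: u, v, rfl, .terminal t hu, hv⟩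
    | nonterminal r hr hx h =>
      obtain ⟨u, v, rfl, hu, hv⟩ := ih h
      exact ⟨_ ++ u, v, (List.append_assoc _ _ _).symm, .nonterminal r hr hx hu, hv⟩

theorem Yields.derives {s : List (Symbol T g.NT)} {w : List T} (h : g.Yields s w) :
    g.Derives s (w.map .terminal) := by
  induction h with
  | nil => exact .refl _
  | terminal t _ ih => exact ih.append_left [.terminal t]
  | nonterminal r hr _ _ ihu ih =>
    rw [List.map_append]
    refine Produces.trans_derives ⟨r, hr, .head _⟩ ?_
    exact (ihu.append_right _).trans (ih.append_left _)

theorem yields_iff_derives {s : List (Symbol T g.NT)} {w : List T} :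
    g.Yields s w ↔ g.Derives s (w.map .terminal) := by
  refine ⟨Yields.derives, fun h ↦ ?_⟩
  induction h using Relation.ReflTransGen.head_induction_on with
  | refl => exact .map_terminal w
  | head h _ ih =>
    obtain ⟨r, hr, hrw⟩ := h
    obtain ⟨p, q, rfl, rfl⟩ := hrw.exists_parts
    obtain ⟨x, z, rfl, hx, hz⟩ := ih.exists_of_append
    obtain ⟨x, y, rfl, hx, hy⟩ := hx.exists_of_append
    refine (hx.append ?_).append hz
    simpa using Yields.nonterminal r hr hy .nil

/-- A parse forest with long frontier has a subtree whose frontier has length in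
`(K, M * K]`, where `M` bounds the lengths of the right-hand sides. -/
theorem Yields.exists_subtree {M K : ℕ} (hM : ∀ r ∈ g.rules, r.output.length ≤ M) (hK : 1 ≤ K)
    {s : List (Symbol T g.NT)} {w : List T} (h : g.Yields s w) (hw : K * s.length < w.length) :
    ∃ r ∈ g.rules, ∃ x u y, w = x ++ u ++ y ∧ K < u.length ∧ u.length ≤ M * K ∧
      g.Yields [.nonterminal r.input] u ∧
      ∀ v, g.Yields [.nonterminal r.input] v → g.Yields s (x ++ v ++ y) := by
  induction h with
  | nil => simp at hw
  | terminal t _ ih =>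
    simp only [List.length_cons] at hw
    obtain ⟨r, hr, x, u, y, rfl, h₁, h₂, hu, hv⟩ := ih (by lia)
    exact ⟨r, hr, t :: x, u, y, by simp, h₁, h₂, hu, fun v h ↦ .terminal t (hv v h)⟩
  | @nonterminal s z w r hr hz hs ihz ihs =>
    simp only [List.length_cons, List.length_append, Nat.mul_succ] at hw
    by_cases hws : K * s.length < w.length
    · obtain ⟨r', hr', x, u, y, rfl, h₁, h₂, hu, hv⟩ := ihs hws
      refine ⟨r', hr', z ++ x, u, y, by simp, h₁, h₂, hu, fun v h ↦ ?_⟩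
      simpa using Yields.nonterminal r hr hz (hv v h)
    by_cases hzM : z.length ≤ M * K
    · refine ⟨r, hr, [], z, w, rfl, by omega, hzM, ?_, fun v h ↦ h.append hs⟩
      simpa using Yields.nonterminal r hr hz .nil
    · have := Nat.mul_le_mul_right K (hM r hr)
      obtain ⟨r', hr', x, u, y, rfl, h₁, h₂, hu, hv⟩ := ihz (by lia)
      refine ⟨r', hr', x, u, y ++ w, by simp, h₁, h₂, hu, fun v h ↦ ?_⟩
      simpa using Yields.nonterminal r hr (hv v h) hs

end ContextFreeGrammar

/-- **Interchange lemma**: for a finite colouring of the factorizations of a long word of a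
context-free language, there are two factorizations of the same colour, with middle factors of
bounded and quite different lengths, that may exchange their middle factors. -/
theorem Language.IsContextFree.exists_interchange {T : Type*} {L : Language T}
    (hL : L.IsContextFree) (C : Type*) [Finite C] (c : ℕ) :
    ∃ N, ∀ w ∈ L, N < w.length → ∀ color : List T → List T → List T → C,
      ∃ x u y x' u' y', w = x ++ u ++ y ∧ w = x' ++ u' ++ y' ∧ color x u y = color x' u' y' ∧
        u.length + c < u'.length ∧ u'.length ≤ N ∧ x ++ u' ++ y ∈ L ∧ x' ++ u ++ y' ∈ L := by
  classical
  obtain ⟨g, rfl⟩ := hL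
  have := Fintype.ofFinite C
  obtain ⟨M, hM⟩ : ∃ M, ∀ r ∈ g.rules, r.output.length ≤ M :=
    ⟨_, fun r hr ↦ Finset.le_sup (f := fun r ↦ r.output.length) hr⟩
  let B := M + c + 1
  let k := Fintype.card (g.rules × C)
  refine ⟨B ^ (k + 2), fun w hw hlen color ↦ ?_⟩
  have hB : ∀ i, 1 ≤ B ^ i := fun i ↦ Nat.one_le_pow _ _ (by omega)
  have hsucc : ∀ i, M * B ^ i + c ≤ B ^ (i + 1) := fun i ↦ by
    have := hB i
    have : B ^ (i + 1) = M * B ^ i + c * B ^ i + B ^ i := by simp only [B]; ring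
    nlinarith
  have hmono : ∀ {i j}, i ≤ j → B ^ i ≤ B ^ j := fun h ↦ Nat.pow_le_pow_right (by omega) h
  have hsub : ∀ i : Fin (k + 1), ∃ r : g.rules, ∃ x u y, w = x ++ u ++ y ∧
      B ^ (i : ℕ) < u.length ∧ u.length ≤ M * B ^ (i : ℕ) ∧
      g.Yields [.nonterminal r.1.input] u ∧
      ∀ v, g.Yields [.nonterminal r.1.input] v → x ++ v ++ y ∈ g.language := fun i ↦ by
    have hi : B ^ (i : ℕ) ≤ B ^ (k + 2) := hmono (by omega)
    obtain ⟨r, hr, x, u, y, h₁, h₂, h₃, h₄, h₅⟩ :=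
      (ContextFreeGrammar.yields_iff_derives.2 hw).exists_subtree hM (hB i)
        (by simp only [List.length_singleton]; omega)
    exact ⟨⟨r, hr⟩, x, u, y, h₁, h₂, h₃, h₄, fun v hv ↦ (h₅ v hv).derives⟩
  choose r x u y h₁ h₂ h₃ h₄ h₅ using hsub
  obtain ⟨i, j, hij, heq⟩ := Fintype.exists_ne_map_eq_of_card_lt
    (fun i ↦ (r i, color (x i) (u i) (y i))) (by simp [k])
  wlog hlt : i < j generalizing i j
  · exact this j i hij.symm heq.symm (lt_of_le_of_ne (not_lt.1 hlt) hij.symm)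
  obtain ⟨hr, hc⟩ := Prod.mk.inj heq
  refine ⟨x i, u i, y i, x j, u j, y j, h₁ i, h₁ j, hc, ?_, ?_, h₅ i _ (hr ▸ h₄ j),
    h₅ j _ (hr ▸ h₄ i)⟩
  · have := hsucc i
    have : B ^ ((i : ℕ) + 1) ≤ B ^ (j : ℕ) := hmono hlt
    have := h₂ j
    have := h₃ i
    omega
  · have := hsucc j
    have : B ^ ((j : ℕ) + 1) ≤ B ^ (k + 2) := hmono (by omega)
    have := h₃ j
    omega

theorem IsShuffle.count_add {α : Type*} [DecidableEq α] {u v w : List α} (h : IsShuffle u v w)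
    (c : α) : w.count c = u.count c + v.count c := by
  induction h with
  | nil => simp
  | left _ ih => simp only [List.count_cons, ih]; omega
  | right _ ih => simp only [List.count_cons, ih]; omega

theorem IsShuffle.sublist_left {α : Type*} {u v w : List α} (h : IsShuffle u v w) :
    u.Sublist w := by
  induction h with
  | nil => exact List.Sublist.slnil
  | left _ ih => exact ih.cons_cons _
  | right _ ih => exact ih.cons _

theorem IsShuffle.append_left {α : Type*} {u v w : List α} (h : IsShuffle u v w) (s : List α) :
    IsShuffle (s ++ u) v (s ++ w) := by
  induction s with
  | nil => exact h
  | cons _ _ ih => exact ih.left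

theorem IsShuffle.append_right {α : Type*} {u v w : List α} (h : IsShuffle u v w) (s : List α) :
    IsShuffle u (s ++ v) (s ++ w) := by
  induction s with
  | nil => exact h
  | cons _ _ ih => exact ih.right

/-- If the second word starts with `b`, leading `a`s of a shuffle come from the first word. -/
theorem IsShuffle.le_of_replicate_append {α : Type*} {a b : α} (hab : a ≠ b) {r s z : List α}
    {i n : ℕ}
    (h : IsShuffle (List.replicate n a ++ b :: r) (b :: s) (List.replicate i a ++ z)) :
    i ≤ n := by
  induction i generalizing n with
  | zero => exact Nat.zero_le _
  | succ i ih =>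
    rw [List.replicate_succ, List.cons_append] at h
    generalize hu : List.replicate n a ++ b :: r = u at h
    cases h with
    | left h =>
      cases n with
      | zero => simp_all
      | succ n =>
        rw [List.replicate_succ, List.cons_append, List.cons.injEq] at hu
        exact Nat.succ_le_succ (ih (hu.2 ▸ h))
    | right h => exact absurd rfl hab

theorem sublist_of_sublist_replicate_append {α : Type*} {a b : α} (hab : a ≠ b) {r z : List α}
    {i : ℕ} (h : (b :: r).Sublist (List.replicate i a ++ z)) : (b :: r).Sublist z := by
  induction i with
  | zero => simpa using h
  | succ i ih =>
    rw [List.replicate_succ, List.cons_append] at h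
    cases h with
    | cons _ h => exact ih h
    | cons_cons _ h => exact absurd rfl hab

/-- The shuffle of `{aⁿ b a bⁿ a | n ≥ 1}` and `{bᵐ a^{m+1} | m ≥ 1}`. -/
def shuffleLang : Language Bool :=
  langShuffle
    {w : List Bool | ∃ n : ℕ, 1 ≤ n ∧
      w = List.replicate n false ++ [true, false] ++ List.replicate n true ++ [false]}
    {w : List Bool | ∃ m : ℕ, 1 ≤ m ∧
      w = List.replicate m true ++ List.replicate (m + 1) false}

/-- The word `aⁱ bʲ a bᵏ aˡ`. -/
def blockWord (i j k l : ℕ) : List Bool :=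
  List.replicate i false ++ (List.replicate j true ++ (false ::
    (List.replicate k true ++ List.replicate l false)))

theorem mem_shuffleLang {w : List Bool} : w ∈ shuffleLang ↔ ∃ n m : ℕ, 1 ≤ n ∧ 1 ≤ m ∧
    IsShuffle (List.replicate n false ++ [true, false] ++ List.replicate n true ++ [false])
      (List.replicate m true ++ List.replicate (m + 1) false) w := by
  change w ∈ langShuffle _ _ ↔ _
  simp only [langShuffle, wordShuffle, Set.mem_iUnion, Set.mem_ofPred_eq]
  constructor
  · rintro ⟨_, ⟨n, hn, rfl⟩, _, ⟨m, hm, rfl⟩, h⟩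
    exact ⟨n, m, hn, hm, h⟩
  · rintro ⟨n, m, hn, hm, h⟩
    exact ⟨_, ⟨n, hn, rfl⟩, _, ⟨m, hm, rfl⟩, h⟩

theorem count_of_mem_shuffleLang {w : List Bool} (hw : w ∈ shuffleLang) :
    w.count false = w.count true + 2 := by
  obtain ⟨n, m, -, -, h⟩ := mem_shuffleLang.1 hw
  rw [h.count_add, h.count_add]
  simp [List.count_replicate]
  omega

theorem le_of_blockWord_mem {i j k l : ℕ} (hw : blockWord i j k l ∈ shuffleLang) : i ≤ k := by
  obtain ⟨n, m, -, hm, h⟩ := mem_shuffleLang.1 hw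
  obtain ⟨m, rfl⟩ := Nat.exists_eq_add_of_le' hm
  have hin : i ≤ n := by
    refine IsShuffle.le_of_replicate_append (a := false) (b := true) (by decide) (n := n)
      (r := [false] ++ List.replicate n true ++ [false])
      (s := List.replicate m true ++ List.replicate (m + 1 + 1) false) (i := i)
      (z := List.replicate j true ++ (false :: (List.replicate k true ++ List.replicate l false)))
      ?_
    simpa [blockWord, List.replicate_succ] using h
  have hsub : (true :: false :: List.replicate n true).Sublist (blockWord i j k l) := by
    refine List.Sublist.trans ?_ h.sublist_left
    simp
  have h₁ := (List.sublist_cons_self _ _).trans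
    (sublist_of_sublist_replicate_append (by decide) hsub)
  have h₂ := List.cons_sublist_cons.1 (sublist_of_sublist_replicate_append (by decide) h₁)
  have h₃ := h₂.count_le true
  simp [List.count_replicate] at h₃
  omega

theorem blockWord_mem {n : ℕ} (hn : 2 ≤ n) : blockWord n n n (n + 1) ∈ shuffleLang := by
  obtain ⟨m, rfl⟩ := Nat.exists_eq_add_of_le' hn
  refine mem_shuffleLang.2 ⟨m + 2, m + 1, by omega, by omega, ?_⟩
  have h := ((((((IsShuffle.nil (α := Bool)).append_right
    (List.replicate (m + 2) false)).append_left
    (false :: (List.replicate (m + 2) true ++ [false]))).append_right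
    (List.replicate (m + 1) true)).append_left [true]).append_left
    (List.replicate (m + 2) false))
  simpa [blockWord, List.replicate_succ] using h

/-- The factorization `x u y` of `aⁿ bⁿ a bⁿ a^{n+1}` has `u` inside the first `aⁿ bⁿ`. -/
def IsFirstWindow (n : ℕ) (x u y : List Bool) : Prop :=
  ∃ p s t q, p + s = n ∧ t + q = n ∧ x = List.replicate p false ∧
    u = List.replicate s false ++ List.replicate t true ∧
    y = blockWord 0 q n (n + 1)

/-- The factorization `x u y` of `aⁿ bⁿ a bⁿ a^{n+1}` has `u` inside the last `bⁿ a^{n+1}`. -/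
def IsLastWindow (n : ℕ) (x u y : List Bool) : Prop :=
  ∃ p s t q, p + s = n ∧ t + q = n + 1 ∧ x = blockWord n n p 0 ∧
    u = List.replicate s true ++ List.replicate t false ∧
    y = List.replicate q false

theorem window_cases {n : ℕ} {x u y : List Bool} (h : blockWord n n n (n + 1) = x ++ u ++ y)
    (hu : u.length ≤ n) : IsFirstWindow n x u y ∨ IsLastWindow n x u y ∨
      u.count true = 0 ∨ u.count false ≤ 1 := by
  have hlen : x.length + u.length + y.length = 4 * n + 2 := by
    have := congrArg List.length h
    simp [blockWord] at this
    omega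
  have hx : x = (blockWord n n n (n + 1)).take x.length := by simp [h]
  have hy : y = (blockWord n n n (n + 1)).drop (x.length + u.length) := by simp [h]
  have hu' : u = ((blockWord n n n (n + 1)).drop x.length).take u.length := by simp [h]
  generalize x.length = p at *
  generalize u.length = l at *
  by_cases h₁ : p ≤ n ∧ n ≤ p + l
  · refine .inl ⟨p, n - p, p + l - n, 2 * n - (p + l), by omega, by omega, ?_, ?_, ?_⟩
    · rw [hx]
      simp [blockWord, List.take_append, Nat.sub_eq_zero_of_le, h₁.1]
    · rw [hu']
      have e₁ : p - n = 0 := by omega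
      have e₂ : min l (n - p) = n - p := by omega
      have e₃ : l - (n - p) = p + l - n := by omega
      have e₄ : min (p + l - n) n = p + l - n := by omega
      have e₅ : p + l - n - n = 0 := by omega
      simp [blockWord, List.take_append, List.drop_append, e₁, e₂, e₃, e₄, e₅]
    · rw [hy]
      have e₁ : n - (p + l) = 0 := by omega
      have e₂ : n - (p + l - n) = 2 * n - (p + l) := by omega
      have e₃ : p + l - n - n = 0 := by omega
      simp [blockWord, List.drop_append, e₁, e₂, e₃]
  by_cases h₂ : p ≤ 3 * n + 1 ∧ 3 * n + 1 ≤ p + l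
  · refine .inr (.inl ⟨p - (2 * n + 1), 3 * n + 1 - p, p + l - (3 * n + 1), 4 * n + 2 - (p + l),
      by omega, by omega, ?_, ?_, ?_⟩)
    · obtain ⟨q, rfl⟩ := Nat.exists_eq_add_of_le (show 2 * n + 1 ≤ p by omega)
      rw [hx]
      have e₁ : min (2 * n + 1 + q) n = n := by omega
      have e₂ : 2 * n + 1 + q - n - n = q + 1 := by omega
      have e₃ : min (2 * n + 1 + q - n) n = n := by omega
      have e₄ : min q n = q := by omega
      have e₅ : q - n = 0 := by omega
      simp [blockWord, List.take_append, e₁, e₂, e₃, e₄, e₅]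
    · obtain ⟨q, rfl⟩ := Nat.exists_eq_add_of_le (show 2 * n + 1 ≤ p by omega)
      rw [hu']
      have e₁ : n - (2 * n + 1 + q) = 0 := by omega
      have e₂ : 2 * n + 1 + q - n - n = q + 1 := by omega
      have e₃ : n - (2 * n + 1 + q - n) = 0 := by omega
      have e₄ : min l (n - q) = 3 * n + 1 - (2 * n + 1 + q) := by omega
      have e₅ : q - n = 0 := by omega
      have e₆ : min (l - (n - q)) (n + 1) = 2 * n + 1 + q + l - (3 * n + 1) := by omega
      simp [blockWord, List.take_append, List.drop_append, e₁, e₂, e₃, e₄, e₅, e₆]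
    · obtain ⟨q, hq⟩ := Nat.exists_eq_add_of_le h₂.2
      rw [hy, hq]
      have e₁ : n - (3 * n + 1 + q) = 0 := by omega
      have e₂ : 3 * n + 1 + q - n - n = n + q + 1 := by omega
      have e₃ : n - (3 * n + 1 + q - n) = 0 := by omega
      have e₄ : n + 1 - q = 4 * n + 2 - (3 * n + 1 + q) := by omega
      simp [blockWord, List.drop_append, e₁, e₂, e₃, e₄]
  refine .inr (.inr ?_)
  have hblock : blockWord n n n (n + 1) = List.replicate n false ++ (List.replicate n true ++
      (List.replicate 1 false ++ (List.replicate n true ++ List.replicate (n + 1) false))) := rfl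
  rw [hu', hblock]
  simp only [List.take_append, List.drop_append, List.drop_replicate, List.take_replicate,
    List.length_replicate, List.count_append, List.count_replicate, beq_self_eq_true, beq_iff_eq,
    Bool.false_eq_true, Bool.true_eq_false, if_true, if_false]
  omega

theorem not_isContextFree_shuffleLang : ¬ shuffleLang.IsContextFree := by
  intro hL
  obtain ⟨N, hN⟩ := hL.exists_interchange (Prop × Prop) 2
  have hw : blockWord (N + 2) (N + 2) (N + 2) (N + 2 + 1) ∈ shuffleLang :=
    blockWord_mem (by omega)
  generalize hn : N + 2 = n at hw
  obtain ⟨x, u, y, x', u', y', h, h', hc, hlt, hle, hm, hm'⟩ := hN _ hw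
    (by simp [blockWord]; omega) (fun x u y ↦ (IsFirstWindow n x u y, IsLastWindow n x u y))
  obtain ⟨hc₁, hc₂⟩ := Prod.mk.inj hc
  have b := count_of_mem_shuffleLang hw
  have b' := b
  have bm := count_of_mem_shuffleLang hm
  rw [h] at b
  rw [h'] at b'
  simp only [List.count_append] at b b' bm
  have hlen := List.count_true_add_count_false u
  have hlen' := List.count_true_add_count_false u'
  by_cases h₁ : IsFirstWindow n x u y
  · obtain ⟨p', s', t', q', hp', hq', rfl, rfl, rfl⟩ := hc₁ ▸ h₁
    obtain ⟨p, s, t, q, hp, hq, rfl, rfl, rfl⟩ := h₁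
    have := le_of_blockWord_mem (i := p + s') (j := t' + q) (k := n) (l := n + 1)
      (by simpa only [blockWord, List.replicate_add p s', List.replicate_add t' q,
        List.replicate_zero, List.nil_append, List.append_nil, List.append_assoc,
        List.cons_append] using hm)
    simp [List.count_replicate] at b b' bm hlt
    omega
  by_cases h₂ : IsLastWindow n x u y
  · obtain ⟨p', s', t', q', hp', hq', rfl, rfl, rfl⟩ := hc₂ ▸ h₂
    obtain ⟨p, s, t, q, hp, hq, rfl, rfl, rfl⟩ := h₂
    have := le_of_blockWord_mem (i := n) (j := n) (k := p' + s) (l := t + q')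
      (by simpa only [blockWord, List.replicate_add p' s, List.replicate_add t q',
        List.replicate_zero, List.nil_append, List.append_nil, List.append_assoc,
        List.cons_append] using hm')
    simp [List.count_replicate] at b b' bm hlt
    omega
  have k := ((window_cases h (by omega)).resolve_left h₁).resolve_left h₂
  have k' := ((window_cases h' (by omega)).resolve_left (hc₁ ▸ h₁)).resolve_left (hc₂ ▸ h₂)
  omega

/-- with `a = false`, `b = true`, the shuffle of
`L₁ = {aⁿ b a bⁿ a | n ≥ 1}` and `L₂ = {bᵐ a^{m+1} | m ≥ 1}` is not context-free. -/
theorem stmt_8 :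
    ¬ Language.IsContextFree
      (langShuffle
        {w : List Bool | ∃ n : ℕ, 1 ≤ n ∧
          w = List.replicate n false ++ [true, false] ++ List.replicate n true ++ [false]}
        {w : List Bool | ∃ m : ℕ, 1 ≤ m ∧
          w = List.replicate m true ++ List.replicate (m + 1) false}) :=
  not_isContextFree_shuffleLang
end

section
/- Over the two-letter alphabet {a,b}, let L₁ = {aⁿ b a bⁿ a | n ≥ 1}, L₂ = {bᵐ a^{m+1} | m ≥ 1}, and R = {aⁱ bʲ a² bˡ aᵖ | i ≥ 1, j ≥ 2, l ≥ 1, p ≥ 2}. Then (L₁ ⧢ L₂) ∩ R = {aⁿ b^{m+1} a² bⁿ a^{m+1} | n, m ≥ 1}. -/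
namespace IsShuffle

variable {α : Type*}

theorem self_nil (u : List α) : IsShuffle u [] u := by
  induction u with
  | nil => exact .nil
  | cons a u ih => exact .left ih

theorem nil_self (v : List α) : IsShuffle [] v v := by
  induction v with
  | nil => exact .nil
  | cons a v ih => exact .right ih

theorem append {u v w u' v' w' : List α} (h : IsShuffle u v w) (h' : IsShuffle u' v' w') :
    IsShuffle (u ++ u') (v ++ v') (w ++ w') := by
  induction h with
  | nil => exact h'
  | left _ ih => exact .left ih
  | right _ ih => exact .right ih

theorem exists_of_append {u v w₁ w₂ : List α} (h : IsShuffle u v (w₁ ++ w₂)) :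
    ∃ u₁ u₂ v₁ v₂, u = u₁ ++ u₂ ∧ v = v₁ ++ v₂ ∧ IsShuffle u₁ v₁ w₁ ∧ IsShuffle u₂ v₂ w₂ := by
  induction w₁ generalizing u v with
  | nil => exact ⟨[], u, [], v, rfl, rfl, .nil, h⟩
  | cons x w₁ ih =>
    rw [List.cons_append] at h
    cases h with
    | left h =>
      obtain ⟨u₁, u₂, v₁, v₂, rfl, rfl, h₁, h₂⟩ := ih h
      exact ⟨x :: u₁, u₂, v₁, v₂, rfl, rfl, .left h₁, h₂⟩
    | right h =>
      obtain ⟨u₁, u₂, v₁, v₂, rfl, rfl, h₁, h₂⟩ := ih h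
      exact ⟨u₁, u₂, x :: v₁, v₂, rfl, rfl, .right h₁, h₂⟩

theorem exists_of_replicate {u v : List α} {k : ℕ} {x : α}
    (h : IsShuffle u v (List.replicate k x)) :
    ∃ i j, i + j = k ∧ u = List.replicate i x ∧ v = List.replicate j x := by
  induction k generalizing u v with
  | zero =>
    cases h
    exact ⟨0, 0, rfl, rfl, rfl⟩
  | succ k ih =>
    rw [List.replicate_succ] at h
    cases h with
    | left h =>
      obtain ⟨i, j, rfl, rfl, rfl⟩ := ih h
      exact ⟨i + 1, j, by omega, rfl, rfl⟩
    | right h =>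
      obtain ⟨i, j, rfl, rfl, rfl⟩ := ih h
      exact ⟨i, j + 1, by omega, rfl, rfl⟩

end IsShuffle

theorem List.exists_of_replicate_append_eq {α : Type*} {x y : α} (hxy : x ≠ y) {i n : ℕ}
    {s t : List α} (h : replicate i x ++ s = replicate n x ++ y :: t) :
    ∃ d, n = i + d ∧ s = replicate d x ++ y :: t := by
  induction i generalizing n with
  | zero => exact ⟨n, by omega, by simpa using h⟩
  | succ i ih =>
    cases n with
    | zero => simp [replicate_succ, hxy] at h
    | succ n =>
      simp only [replicate_succ, cons_append, cons.injEq, true_and] at h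
      obtain ⟨d, rfl, hs⟩ := ih h
      exact ⟨d, by omega, hs⟩

open List

theorem replicate_true_append_replicate_false_ne (l p : ℕ) (s t r : List Bool) :
    replicate l true ++ replicate p false ≠ s ++ false :: (t ++ true :: r) := by
  intro h
  have hs : (replicate l true ++ replicate p false).Pairwise (· ≥ ·) := by
    simp [pairwise_append, pairwise_replicate]
  rw [h] at hs
  simp only [pairwise_append, pairwise_cons] at hs
  exact absurd (hs.2.1.1 true (by simp)) (by decide)

/-- The word `aⁿ b a bⁿ a` has at most one factorization into blocks `a* b* a* b* a*`. -/
theorem blocks_of_eq_left_word {n i j k l p : ℕ} (hn : 1 ≤ n)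
    (h : replicate i false ++ (replicate j true ++ (replicate k false ++
      (replicate l true ++ replicate p false))) =
      replicate n false ++ true :: false :: (replicate n true ++ [false])) :
    i = n ∧ j = 1 ∧ k = 1 ∧ l = n ∧ p = 1 := by
  obtain ⟨n, rfl⟩ : ∃ n', n = n' + 1 := ⟨n - 1, by omega⟩
  have key : ∀ d, replicate k false ++ (replicate l true ++ replicate p false) ≠
      replicate d false ++ true :: false :: (replicate (n + 1) true ++ [false]) := by
    intro d hd
    obtain ⟨e, -, he⟩ := exists_of_replicate_append_eq (by decide) hd
    exact replicate_true_append_replicate_false_ne l p (replicate e false ++ [true]) []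
      (replicate n true ++ [false]) (by simpa [replicate_succ] using he)
  obtain ⟨d, hd, h⟩ := exists_of_replicate_append_eq (by decide) h
  rcases j with _ | j
  · exact absurd (by simpa using h) (key d)
  rcases d with _ | d
  swap
  · simp [replicate_succ] at h
  simp only [replicate_succ (n := j), replicate_zero, cons_append, nil_append, cons.injEq,
    true_and] at h
  rcases j with _ | j
  swap
  · simp [replicate_succ] at h
  rcases k with _ | k
  · exact absurd (by simpa [replicate_succ] using h)
      (replicate_true_append_replicate_false_ne l p [] [] (replicate n true ++ [false]))
  simp only [replicate_succ (n := k), replicate_zero, cons_append, nil_append, cons.injEq,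
    true_and] at h
  rcases k with _ | k
  swap
  · simp [replicate_succ] at h
  rw [replicate_zero, nil_append] at h
  obtain ⟨g, hg, h⟩ := exists_of_replicate_append_eq (by decide) h
  rcases g with _ | g
  swap
  · rcases p with _ | p <;> simp [replicate_succ] at h
  have hp := congrArg length h
  simp at hp
  omega

/-- If `bᵐ aᵐ⁺¹` factors into blocks `a* b* a b* a*`, then only one factorization is possible. -/
theorem blocks_of_eq_right_word {m i j l p : ℕ} (hm : 1 ≤ m)
    (h : replicate i false ++ (replicate j true ++ (replicate 1 false ++
      (replicate l true ++ replicate p false))) =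
      replicate m true ++ replicate (m + 1) false) :
    i = 0 ∧ j = m ∧ l = 0 ∧ p = m := by
  obtain ⟨m, rfl⟩ : ∃ m', m = m' + 1 := ⟨m - 1, by omega⟩
  rcases i with _ | i
  swap
  · simp [replicate_succ] at h
  obtain ⟨d, hd, h⟩ := exists_of_replicate_append_eq (x := true) (y := false)
    (t := replicate (m + 1) false) (by decide) (by simpa [replicate_succ (n := m + 1)] using h)
  rcases d with _ | d
  swap
  · simp [replicate_succ] at h
  rcases l with _ | l
  swap
  · simp [replicate_succ] at h
  have hp := congrArg length h
  simp at hp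
  omega

/-- with `a = false`, `b = true`,
`(L₁ ⧢ L₂) ∩ R = {aⁿ b^{m+1} a² bⁿ a^{m+1} | n, m ≥ 1}` where
`L₁ = {aⁿ b a bⁿ a | n ≥ 1}`, `L₂ = {bᵐ a^{m+1} | m ≥ 1}`, and
`R = {aⁱ bʲ a² bˡ aᵖ | i ≥ 1, j ≥ 2, l ≥ 1, p ≥ 2}`. -/
theorem stmt_10 :
    langShuffle
        {w : List Bool | ∃ n : ℕ, 1 ≤ n ∧
          w = List.replicate n false ++ [true, false] ++ List.replicate n true ++ [false]}
        {w : List Bool | ∃ m : ℕ, 1 ≤ m ∧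
          w = List.replicate m true ++ List.replicate (m + 1) false} ∩
      {w : List Bool | ∃ i j l p : ℕ, 1 ≤ i ∧ 2 ≤ j ∧ 1 ≤ l ∧ 2 ≤ p ∧
        w = List.replicate i false ++ List.replicate j true ++
            List.replicate 2 false ++ List.replicate l true ++ List.replicate p false} =
    {w : List Bool | ∃ n m : ℕ, 1 ≤ n ∧ 1 ≤ m ∧
      w = List.replicate n false ++ List.replicate (m + 1) true ++
          List.replicate 2 false ++ List.replicate n true ++
          List.replicate (m + 1) false} := by
  ext w
  simp only [langShuffle, wordShuffle, Set.mem_inter_iff, Set.mem_iUnion, Set.mem_ofPred_eq,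
    exists_prop]
  constructor
  · rintro ⟨⟨_, ⟨n, hn, rfl⟩, _, ⟨m, hm, rfl⟩, hw⟩, i, j, l, p, -, -, -, -, rfl⟩
    obtain ⟨_, _, _, _, hu, hv, hw, h₅⟩ := hw.exists_of_append
    obtain ⟨_, _, _, _, rfl, rfl, hw, h₄⟩ := hw.exists_of_append
    obtain ⟨_, _, _, _, rfl, rfl, hw, h₃⟩ := hw.exists_of_append
    obtain ⟨_, _, _, _, rfl, rfl, h₁, h₂⟩ := hw.exists_of_append
    obtain ⟨i₁, i₂, hi, rfl, rfl⟩ := h₁.exists_of_replicate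
    obtain ⟨j₁, j₂, hj, rfl, rfl⟩ := h₂.exists_of_replicate
    obtain ⟨k₁, k₂, hk, rfl, rfl⟩ := h₃.exists_of_replicate
    obtain ⟨l₁, l₂, hl, rfl, rfl⟩ := h₄.exists_of_replicate
    obtain ⟨p₁, p₂, hp, rfl, rfl⟩ := h₅.exists_of_replicate
    obtain ⟨rfl, rfl, rfl, rfl, rfl⟩ := blocks_of_eq_left_word (i := i₁) (j := j₁) (k := k₁)
      (l := l₁) (p := p₁) hn (by simpa only [append_assoc, cons_append, nil_append] using hu.symm)
    obtain rfl : k₂ = 1 := by omega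
    obtain ⟨rfl, rfl, rfl, rfl⟩ := blocks_of_eq_right_word (i := i₂) (j := j₂) (l := l₂)
      (p := p₂) hm (by simpa only [append_assoc] using hv.symm)
    exact ⟨_, _, hn, hm, by rw [← hi, ← hj, ← hl, ← hp, Nat.add_comm 1]; rfl⟩
  · rintro ⟨n, m, hn, hm, rfl⟩
    refine ⟨⟨_, ⟨n, hn, rfl⟩, _, ⟨m, hm, rfl⟩, ?_⟩, n, m + 1, n, m + 1, hn, by omega, hn,
      by omega, rfl⟩
    have h := ((((IsShuffle.self_nil (replicate n false)).append
      ((IsShuffle.self_nil [true]).append (IsShuffle.nil_self (replicate m true)))).append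
      ((IsShuffle.self_nil [false]).append (IsShuffle.nil_self [false]))).append
      (IsShuffle.self_nil (replicate n true))).append
      ((IsShuffle.self_nil [false]).append (IsShuffle.nil_self (replicate m false)))
    simpa [replicate_succ] using h
end

section
/- Over the two-letter alphabet {a,b}, let L₁ = ({aⁿ b^{n+1} | n ≥ 1})⁺ · {aᵐ | m ≥ 1} and L₂ = {a} · ({bⁿ a^{n+1} | n ≥ 1})⁺, where K⁺ = K · K* denotes Kleene plus and · denotes language concatenation. Then L₁ ∩ L₂ = {c₁¹ c₂² c₃³ ⋯ c_{2k+1}^{2k+1} | k ≥ 1}, i.e. the set of words that are concatenations of blocks whose j-th block (1 ≤ j ≤ 2k+1, k ≥ 1) consists of j copies of a if j is odd and j copies of b if j is even; equivalently, {a b² a³ b⁴ ⋯ a^{2k} ? pattern | k ≥ 1} = {a¹ b² a³ ⋯ aⁿ b^{n+1} a^{n+2} | n ≥ 1 odd}. -/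
open Computability

/-- Kleene plus: `K⁺ = K · K*`. -/
def kplus {α : Type*} (K : Language α) : Language α := K * K∗

/-- `{aⁿ b^{n+1} | n ≥ 1}` with `a = false`, `b = true`. -/
def Lab : Language Bool :=
  {w | ∃ n : ℕ, 1 ≤ n ∧ w = List.replicate n false ++ List.replicate (n + 1) true}

/-- `{aᵐ | m ≥ 1}`. -/
def Las : Language Bool := {w | ∃ m : ℕ, 1 ≤ m ∧ w = List.replicate m false}

/-- `{bⁿ a^{n+1} | n ≥ 1}`. -/
def Lba : Language Bool :=
  {w | ∃ n : ℕ, 1 ≤ n ∧ w = List.replicate n true ++ List.replicate (n + 1) false}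

/-- The word `aᵖ bᵖ⁺¹ aᵖ⁺² ⋯ aᵖ⁺²ᵏ`. -/
def staircase : ℕ → ℕ → List Bool
  | p, 0 => List.replicate p false
  | p, k + 1 => List.replicate p false ++ List.replicate (p + 1) true ++ staircase (p + 2) k

theorem staircase_eq_flatten (k p : ℕ) :
    staircase p k = ((List.range (2 * k + 1)).map
      (fun j => List.replicate (j + p) (if j % 2 = 0 then false else true))).flatten := by
  induction k generalizing p with
  | zero => simp [staircase]
  | succ k ih =>
    have hmod (j : ℕ) : (j + 1 + 1) % 2 = j % 2 := by omega
    have hadd (j : ℕ) : j + 1 + 1 + p = j + (p + 2) := by omega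
    rw [staircase, ih, show 2 * (k + 1) + 1 = (2 * k + 1) + 1 + 1 by ring,
      List.range_succ_eq_map (n := 2 * k + 1 + 1), List.range_succ_eq_map (n := 2 * k + 1)]
    simp [Function.comp_def, hmod, hadd, Nat.add_comm 1 p]

theorem staircase_mem_kstar_mul_Las (k : ℕ) {p : ℕ} (hp : 1 ≤ p) :
    staircase p k ∈ Lab∗ * Las := by
  induction k generalizing p with
  | zero => exact Language.mem_mul.2 ⟨[], Language.nil_mem_kstar _, _, ⟨p, hp, rfl⟩, rfl⟩
  | succ k ih =>
    have h : staircase p (k + 1) ∈ Lab * (Lab∗ * Las) :=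
      Language.mem_mul.2 ⟨_, ⟨p, hp, rfl⟩, _, ih (by omega), rfl⟩
    rw [← mul_assoc] at h
    exact mul_le_mul_left (mul_kstar_le_kstar (a := Lab)) Las h

theorem staircase_succ_mem_kplus_mul_Las (k : ℕ) {p : ℕ} (hp : 1 ≤ p) :
    staircase p (k + 1) ∈ kplus Lab * Las := by
  rw [kplus, mul_assoc]
  exact Language.mem_mul.2
    ⟨_, ⟨p, hp, rfl⟩, _, staircase_mem_kstar_mul_Las k (by omega), rfl⟩

theorem exists_mem_kstar_staircase_eq (k p : ℕ) :
    ∃ x ∈ Lba∗, staircase p k = List.replicate p false ++ x := by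
  induction k generalizing p with
  | zero => exact ⟨[], Language.nil_mem_kstar _, by simp [staircase]⟩
  | succ k ih =>
    obtain ⟨x, hx, h⟩ := ih (p + 2)
    refine ⟨_, mul_kstar_le_kstar (a := Lba) (Language.mem_mul.2
      ⟨_, ⟨p + 1, by omega, rfl⟩, x, hx, rfl⟩), ?_⟩
    simp [staircase, h]

theorem exists_mem_kplus_staircase_succ_eq (k p : ℕ) :
    ∃ x ∈ kplus Lba, staircase p (k + 1) = List.replicate p false ++ x := by
  obtain ⟨x, hx, h⟩ := exists_mem_kstar_staircase_eq k (p + 2)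
  refine ⟨_, Language.mem_mul.2 ⟨_, ⟨p + 1, by omega, rfl⟩, x, hx, rfl⟩, ?_⟩
  simp [staircase, h]

/-- Initial runs of a letter that are followed by a different letter can be compared. -/
theorem replicate_append_cons_inj {α : Type*} {c d e : α} (hd : c ≠ d) (he : c ≠ e)
    {m n : ℕ} {x y : List α}
    (h : List.replicate m c ++ d :: x = List.replicate n c ++ e :: y) :
    m = n ∧ d :: x = e :: y := by
  induction m generalizing n with
  | zero => cases n <;> simp_all [List.replicate_succ, eq_comm]
  | succ m ih => cases n <;> simp_all [List.replicate_succ]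

theorem exists_cons_of_flatten_append_replicate {L : List (List Bool)} (hL : ∀ y ∈ L, y ∈ Lab)
    {m : ℕ} (hm : 1 ≤ m) :
    ∃ t, L.flatten ++ List.replicate m false = false :: t := by
  cases L with
  | nil => exact ⟨List.replicate (m - 1) false, by
      obtain ⟨m, rfl⟩ := Nat.exists_eq_add_of_le' hm
      simp [List.replicate_succ]⟩
  | cons u L =>
    obtain ⟨n, hn, rfl⟩ := hL u (by simp)
    obtain ⟨n, rfl⟩ := Nat.exists_eq_add_of_le' hn
    simp [List.replicate_succ]

/-- A word with factorizations of both kinds is a staircase. -/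
theorem flatten_append_replicate_eq_staircase {L M : List (List Bool)}
    (hL : ∀ y ∈ L, y ∈ Lab) (hM : ∀ y ∈ M, y ∈ Lba) {m p : ℕ} (hm : 1 ≤ m)
    (h : L.flatten ++ List.replicate m false = List.replicate p false ++ M.flatten) :
    L.flatten ++ List.replicate m false = staircase p L.length := by
  induction L generalizing M p with
  | nil =>
    cases M with
    | nil => simpa [staircase] using h
    | cons v M =>
      obtain ⟨q, hq, rfl⟩ := hM v (by simp)
      have := congrArg (true ∈ ·) h
      simp at this
      omega
  | cons u L ih =>
    obtain ⟨n, hn, rfl⟩ := hL u (by simp)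
    cases M with
    | nil =>
      have := congrArg (true ∈ ·) h
      simp at this
    | cons v M =>
      obtain ⟨q, hq, rfl⟩ := hM v (by simp)
      obtain ⟨q, rfl⟩ := Nat.exists_eq_add_of_le' hq
      have hL' : ∀ y ∈ L, y ∈ Lab := fun y hy => hL y (by simp [hy])
      obtain ⟨t, ht⟩ := exists_cons_of_flatten_append_replicate hL' hm
      simp only [List.flatten_cons, List.append_assoc, List.length_cons, staircase] at h ⊢
      rw [List.replicate_succ (n := n), List.replicate_succ (n := q), List.cons_append,
        List.cons_append] at h
      obtain ⟨rfl, htail⟩ := replicate_append_cons_inj (by simp) (by simp) h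
      rw [ht, List.replicate_succ (n := q + 1), List.cons_append, List.cons.injEq] at htail
      obtain ⟨rfl, hrest⟩ := replicate_append_cons_inj (by simp) (by simp) htail.2
      rw [← List.cons_append, ← List.replicate_succ, ← ht] at hrest
      rw [ih hL' (fun y hy => hM y (by simp [hy])) hrest]

/-- `({aⁿ b^{n+1} | n ≥ 1})⁺ · {aᵐ | m ≥ 1} ∩ {a} · ({bⁿ a^{n+1} | n ≥ 1})⁺`
equals `{a¹ b² a³ ⋯ a^{2k+1} | k ≥ 1}` (blocks `c_j^j`, `j = 1, …, 2k+1`,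
where `c_j = a` for odd `j` and `c_j = b` for even `j`). -/
theorem stmt_11 :
    (kplus Lab * Las) ⊓ (({[false]} : Language Bool) * kplus Lba) =
    {w : List Bool | ∃ k : ℕ, 1 ≤ k ∧
      w = ((List.range (2 * k + 1)).map
        (fun j => List.replicate (j + 1) (if j % 2 = 0 then false else true))).flatten} := by
  simp only [← staircase_eq_flatten]
  ext w
  constructor
  · rintro ⟨h₁, h₂⟩
    rw [kplus] at h₁ h₂
    obtain ⟨_, ⟨u, hu, _, hx, rfl⟩, _, ⟨m, hm, rfl⟩, rfl⟩ := h₁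
    obtain ⟨_, rfl, _, ⟨v, hv, _, hy, rfl⟩, h⟩ := h₂
    obtain ⟨L, rfl, hL⟩ := Language.mem_kstar.1 hx
    obtain ⟨M, rfl, hM⟩ := Language.mem_kstar.1 hy
    refine ⟨(u :: L).length, by simp, ?_⟩
    exact flatten_append_replicate_eq_staircase (L := u :: L) (M := v :: M) (p := 1)
      (by simpa using ⟨hu, hL⟩) (by simpa using ⟨hv, hM⟩) hm h.symm
  · rintro ⟨k, hk, rfl⟩
    obtain ⟨k, rfl⟩ := Nat.exists_eq_add_of_le' hk
    obtain ⟨x, hx, h⟩ := exists_mem_kplus_staircase_succ_eq k 1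
    exact ⟨staircase_succ_mem_kplus_mul_Las k le_rfl,
      Language.mem_mul.2 ⟨_, rfl, x, hx, h.symm⟩⟩
end

section
/- If L₁ and L₂ are regular languages over a finite alphabet α, then their shuffle L₁ ⧢ L₂ is a regular language. -/
/-- The automaton that feeds each letter of its input to exactly one of `M₁` and `M₂`. -/
def DFA.shuffle {α σ₁ σ₂ : Type*} (M₁ : DFA α σ₁) (M₂ : DFA α σ₂) : NFA α (σ₁ × σ₂) where
  step q a := {(M₁.step q.1 a, q.2)} ∪ {(q.1, M₂.step q.2 a)}
  start := {(M₁.start, M₂.start)}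
  accept := M₁.accept ×ˢ M₂.accept

theorem DFA.mem_shuffle_evalFrom_singleton {α σ₁ σ₂ : Type*} (M₁ : DFA α σ₁) (M₂ : DFA α σ₂)
    (w : List α) (s : σ₁) (t : σ₂) (q : σ₁ × σ₂) :
    q ∈ (M₁.shuffle M₂).evalFrom {(s, t)} w ↔
      ∃ u v, IsShuffle u v w ∧ q = (M₁.evalFrom s u, M₂.evalFrom t v) := by
  induction w generalizing s t with
  | nil =>
    constructor
    · rintro rfl
      exact ⟨[], [], .nil, rfl⟩
    · rintro ⟨u, v, h, rfl⟩
      cases h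
      rfl
  | cons a w ih =>
    have hstep : (M₁.shuffle M₂).step (s, t) a = {(M₁.step s a, t)} ∪ {(s, M₂.step t a)} := rfl
    rw [NFA.evalFrom_cons, NFA.stepSet_singleton, hstep, NFA.evalFrom_union, Set.mem_union,
      ih, ih]
    constructor
    · rintro (⟨u, v, h, rfl⟩ | ⟨u, v, h, rfl⟩)
      · exact ⟨a :: u, v, h.left, rfl⟩
      · exact ⟨u, a :: v, h.right, rfl⟩
    · rintro ⟨u, v, h, rfl⟩
      cases h with
      | left h => exact .inl ⟨_, _, h, rfl⟩
      | right h => exact .inr ⟨_, _, h, rfl⟩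

theorem DFA.shuffle_accepts {α σ₁ σ₂ : Type*} (M₁ : DFA α σ₁) (M₂ : DFA α σ₂) :
    (M₁.shuffle M₂).accepts = langShuffle M₁.accepts M₂.accepts := by
  ext w
  have hmem : w ∈ (langShuffle M₁.accepts M₂.accepts : Set (List α)) ↔
      ∃ u ∈ M₁.accepts, ∃ v ∈ M₂.accepts, IsShuffle u v w := by
    simp only [langShuffle, wordShuffle, Set.mem_iUnion, exists_prop, Set.mem_ofPred_eq]
    rfl
  refine Iff.trans ?_ hmem.symm
  rw [NFA.mem_accepts]
  constructor
  · rintro ⟨q, hq, hw⟩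
    obtain ⟨u, v, h, rfl⟩ := (M₁.mem_shuffle_evalFrom_singleton M₂ w _ _ q).1 hw
    exact ⟨u, hq.1, v, hq.2, h⟩
  · rintro ⟨u, hu, v, hv, h⟩
    exact ⟨(M₁.eval u, M₂.eval v), ⟨hu, hv⟩,
      (M₁.mem_shuffle_evalFrom_singleton M₂ w _ _ _).2 ⟨u, v, h, rfl⟩⟩

/-- the shuffle of two regular languages over a finite alphabet is
regular. -/
theorem stmt_16 {α : Type} [Fintype α] (L₁ L₂ : Language α)
    (h₁ : L₁.IsRegular) (h₂ : L₂.IsRegular) :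
    Language.IsRegular (langShuffle L₁ L₂ : Set (List α)) := by
  classical
  obtain ⟨σ₁, _, M₁, rfl⟩ := h₁
  obtain ⟨σ₂, _, M₂, rfl⟩ := h₂
  exact ⟨Set (σ₁ × σ₂), inferInstance, (M₁.shuffle M₂).toDFA,
    NFA.toDFA_correct.trans (M₁.shuffle_accepts M₂)⟩
end
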